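/- Let ℓ ≥ 1 and let α_1,…,α_ℓ ∈ L \ {0} have pairwise distinct norms such that Λ := {N_{L/K}(α_1),…,N_{L/K}(α_ℓ)} is a multiplicative subgroup of K \ {0} of cardinality ℓ. For f, g ∈ L^{ℓn} define, for 1 ≤ j ≤ ℓ and 0 ≤ i ≤ n−1, f_{j,i} := Σ_{t=0}^{ℓ−1} N_{i+tn}(α_j)·f_{i+tn} and g_{j,i} := Σ_{t=0}^{ℓ−1} N_{i+tn}(α_j^{-1})·g_{i+tn}. Then ℓ · Tr_{L/K}(Σ_{i=0}^{ℓn−1} f_i·g_i) = Σ_{j=1}^{ℓ} Tr_{L/K}(Σ_{i=0}^{n−1} f_{j,i}·g_{j,i}). -/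

import Mathlib

/-!
Since `θ ^ n = 1`, the truncated norms factor as `N_{i+tn}(α) = N_n(α)^t * N_i(α)`, and
`N_i(α⁻¹) = N_i(α)⁻¹`. Writing `λ_j = N_n(α_j)`, the product `f_{j,i} * g_{j,i}` is therefore
`∑_{s,t} λ_j^s * λ_j^{-t} * f_{i+sn} * g_{i+tn}`. Summing over `j` and using orthogonality of the
characters `x ↦ x^(s-t)` on the group `Λ = {λ_j}` (`sum_pow_mul_inv_pow`) leaves only the
diagonal `s = t`, with weight `ℓ`. So the identity holds before taking traces, and the trace is
additive.
-/

noncomputable section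

open Finset

variable {K L : Type*} [Field K] [Field L] [Algebra K L]

/-- The `i`-th truncated norm `N_i(y) = ∏_{j=0}^{i-1} θ^j(y)`. -/
def trunorm (θ : L ≃ₐ[K] L) (i : ℕ) (y : L) : L :=
  ∏ j ∈ Finset.range i, (θ ^ j) y

/-- The trace `Tr_{L/K}(x) = ∑_{i=0}^{n-1} θ^i(x)` (as an element of `L`). -/
def TrL (θ : L ≃ₐ[K] L) (n : ℕ) (x : L) : L :=
  ∑ i ∈ Finset.range n, (θ ^ i) x

theorem trunorm_inv (θ : L ≃ₐ[K] L) (i : ℕ) (y : L) :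
    trunorm θ i y⁻¹ = (trunorm θ i y)⁻¹ := by
  simp [trunorm, map_inv₀]

theorem trunorm_ne_zero (θ : L ≃ₐ[K] L) (i : ℕ) {y : L} (hy : y ≠ 0) :
    trunorm θ i y ≠ 0 :=
  Finset.prod_ne_zero_iff.mpr fun j _ => (map_ne_zero_iff _ (θ ^ j).injective).mpr hy

theorem trunorm_add_mul (θ : L ≃ₐ[K] L) (n : ℕ) (hθ : θ ^ n = 1) (i t : ℕ) (y : L) :
    trunorm θ (i + t * n) y = trunorm θ n y ^ t * trunorm θ i y := by
  induction t with
  | zero => simp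
  | succ t ih =>
    have h : i + (t + 1) * n = n + (i + t * n) := by ring
    have h2 : trunorm θ (n + (i + t * n)) y = trunorm θ n y * trunorm θ (i + t * n) y := by
      simp only [trunorm, Finset.prod_range_add, pow_add, hθ, one_mul]
    rw [h, h2, ih]
    ring

theorem TrL_natCast_mul (θ : L ≃ₐ[K] L) (n ℓ : ℕ) (x : L) :
    TrL θ n ((ℓ : L) * x) = (ℓ : L) * TrL θ n x := by
  simp only [TrL, Finset.mul_sum, map_mul, map_natCast]

theorem TrL_sum {ι : Type*} (s : Finset ι) (θ : L ≃ₐ[K] L) (n : ℕ) (x : ι → L) :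
    TrL θ n (∑ j ∈ s, x j) = ∑ j ∈ s, TrL θ n (x j) := by
  simp only [TrL, map_sum]
  exact Finset.sum_comm

theorem sum_range_mul_eq {M : Type*} [AddCommMonoid M] (n ℓ : ℕ) (F : ℕ → M) :
    ∑ i ∈ range (ℓ * n), F i = ∑ i ∈ range n, ∑ t ∈ range ℓ, F (i + t * n) := by
  rw [Finset.sum_comm]
  induction ℓ with
  | zero => simp
  | succ ℓ ih =>
    rw [Nat.succ_mul, Finset.sum_range_add, ih, Finset.sum_range_succ]
    simp only [add_comm]

/-- Orthogonality of the power characters on a set of `ℓ` nonzero elements of a field that is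
closed under multiplication. -/
theorem sum_pow_mul_inv_pow {F : Type*} [Field F] {ℓ : ℕ} (c : Fin ℓ → F)
    (hc0 : ∀ j, c j ≠ 0) (hc : Function.Injective c)
    (hmul : ∀ j j', ∃ j'', c j * c j' = c j'') {s t : ℕ} (hs : s < ℓ) (ht : t < ℓ) :
    ∑ j, c j ^ s * ((c j)⁻¹) ^ t = if s = t then (ℓ : F) else 0 := by
  split_ifs with hst
  · subst hst
    simp only [← mul_pow, mul_inv_cancel₀ (hc0 _), one_pow]
    simp
  -- If the character were trivial, `X ^ s - X ^ t` would have `ℓ` roots but degree `< ℓ`.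
  obtain ⟨j₀, hj₀⟩ : ∃ j₀, c j₀ ^ s * ((c j₀)⁻¹) ^ t ≠ 1 := by
    by_contra! hall
    have hp : (Polynomial.X ^ s - Polynomial.X ^ t : Polynomial F) = 0 := by
      refine Polynomial.eq_zero_of_natDegree_lt_card_of_eval_eq_zero _ hc (fun j => ?_) ?_
      · have h := hall j
        rw [inv_pow, mul_inv_eq_one₀ (pow_ne_zero _ (hc0 j))] at h
        simp [h]
      · refine (Polynomial.natDegree_sub_le _ _).trans_lt ?_
        simp [hs, ht]
    have h := congrArg Polynomial.natDegree (sub_eq_zero.mp hp)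
    simp only [Polynomial.natDegree_X_pow] at h
    exact hst h
  -- Multiplication by `c j₀` permutes the index set and scales the sum by a factor `≠ 1`.
  choose p hp using hmul j₀
  have hpinj : Function.Injective p := fun a b hab => by
    apply hc
    apply mul_left_cancel₀ (hc0 j₀)
    rw [hp, hp, hab]
  have hperm := Function.Bijective.sum_comp (Finite.injective_iff_bijective.mp hpinj)
    (fun j => c j ^ s * ((c j)⁻¹) ^ t)
  have hscale : ∑ j, c (p j) ^ s * ((c (p j))⁻¹) ^ t
      = (c j₀ ^ s * ((c j₀)⁻¹) ^ t) * ∑ j, c j ^ s * ((c j)⁻¹) ^ t := by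
    rw [Finset.mul_sum]
    refine Finset.sum_congr rfl fun j _ => ?_
    rw [← hp, mul_inv, mul_pow, mul_pow]
    ring
  rw [hperm] at hscale
  by_contra hne
  exact hj₀ (mul_right_cancel₀ hne (by rw [← hscale, one_mul]))

theorem stmt_11 (n ℓ : ℕ) (hn1 : 1 ≤ n) (hl1 : 1 ≤ ℓ)
    [IsGalois K L] [FiniteDimensional K L]
    (hn : Module.finrank K L = n) (θ : L ≃ₐ[K] L)
    (hgen : ∀ σ : L ≃ₐ[K] L, σ ∈ Subgroup.zpowers θ)
    (α : Fin ℓ → L) (hα0 : ∀ j, α j ≠ 0)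
    (hdist : Function.Injective fun j => trunorm θ n (α j))
    -- `Λ = {N_{L/K}(α_j)}` is a multiplicative subgroup of `K \ {0}` of cardinality `ℓ`:
    (hone : ∃ j, trunorm θ n (α j) = 1)
    (hmul : ∀ j j', ∃ j'', trunorm θ n (α j) * trunorm θ n (α j') = trunorm θ n (α j''))
    (hinv : ∀ j, ∃ j', trunorm θ n (α j) * trunorm θ n (α j') = 1)
    (f g : ℕ → L) :
    (ℓ : L) * TrL θ n (∑ i ∈ range (ℓ * n), f i * g i)
      = ∑ j : Fin ℓ, TrL θ n (∑ i ∈ range n,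
          (∑ t ∈ range ℓ, trunorm θ (i + t * n) (α j) * f (i + t * n)) *
          (∑ t ∈ range ℓ, trunorm θ (i + t * n) (α j)⁻¹ * g (i + t * n))) := by
  have hθ : θ ^ n = 1 := by
    rw [← hn, ← IsGalois.card_aut_eq_finrank K L]
    exact pow_card_eq_one'
  rw [← TrL_natCast_mul, ← TrL_sum, sum_range_mul_eq, Finset.sum_comm (s := univ),
    Finset.mul_sum]
  congr 1
  refine Finset.sum_congr rfl fun i _ => ?_
  have hterm : ∀ j : Fin ℓ,
      (∑ t ∈ range ℓ, trunorm θ (i + t * n) (α j) * f (i + t * n)) *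
        (∑ t ∈ range ℓ, trunorm θ (i + t * n) (α j)⁻¹ * g (i + t * n))
      = ∑ s ∈ range ℓ, ∑ t ∈ range ℓ,
        (trunorm θ n (α j) ^ s * ((trunorm θ n (α j))⁻¹) ^ t) *
          (f (i + s * n) * g (i + t * n)) := by
    intro j
    rw [Finset.sum_mul_sum]
    refine Finset.sum_congr rfl fun s _ => Finset.sum_congr rfl fun t _ => ?_
    have h0 := mul_inv_cancel₀ (trunorm_ne_zero θ i (hα0 j))
    rw [trunorm_add_mul θ n hθ, trunorm_add_mul θ n hθ, trunorm_inv, trunorm_inv]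
    linear_combination (trunorm θ n (α j) ^ s * ((trunorm θ n (α j))⁻¹) ^ t) *
      (f (i + s * n) * g (i + t * n)) * h0
  simp only [hterm]
  rw [Finset.sum_comm (s := univ), Finset.mul_sum]
  refine Finset.sum_congr rfl fun s hs => ?_
  rw [Finset.sum_comm (s := univ)]
  have horth : ∀ t ∈ range ℓ,
      ∑ j, (trunorm θ n (α j) ^ s * ((trunorm θ n (α j))⁻¹) ^ t) *
          (f (i + s * n) * g (i + t * n))
      = if s = t then (ℓ : L) * (f (i + s * n) * g (i + t * n)) else 0 := by
    intro t ht
    rw [← Finset.sum_mul, sum_pow_mul_inv_pow (fun j => trunorm θ n (α j))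
      (fun j => trunorm_ne_zero θ n (hα0 j)) hdist hmul
      (Finset.mem_range.mp hs) (Finset.mem_range.mp ht), ite_mul, zero_mul]
  rw [Finset.sum_congr rfl horth, Finset.sum_ite_eq, if_pos hs]
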